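/- arXiv:1307.0776 — 4 statements merged into one kernel-verified Lean document; each statement's English description precedes it below -/
import Mathlib

section
/- Let D be a real m×K matrix, let ε > 0, and let a₁, …, a_p ∈ ℝ^m. For each i = 1, …, p suppose cᵢ ∈ ℝ^K satisfies ‖D cᵢ − aᵢ‖₂ ≤ ε and cᵢ minimizes the ℓ¹-norm among all vectors c with ‖D c − aᵢ‖₂ ≤ ε. Let w₁, …, w_p ≥ 0 with Σᵢ wᵢ = 1, set a = Σᵢ wᵢ aᵢ, and suppose c⋆ ∈ ℝ^K satisfies ‖D c⋆ − a‖₂ ≤ ε and minimizes the ℓ¹-norm among all vectors c with ‖D c − a‖₂ ≤ ε. Then ‖c⋆‖₁ ≤ max(‖c₁‖₁, …, ‖c_p‖₁). -/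
/-- The ℓ¹-norm of a finitely indexed real vector. -/
def l1norm {ι : Type*} [Fintype ι] (x : ι → ℝ) : ℝ := ∑ i, |x i|

/-- The Euclidean (ℓ²) norm of a finitely indexed real vector. -/
noncomputable def l2norm {ι : Type*} [Fintype ι] (x : ι → ℝ) : ℝ :=
  Real.sqrt (∑ i, x i ^ 2)

theorem l1norm_eq_norm_toLp {ι : Type*} [Fintype ι] (x : ι → ℝ) :
    l1norm x = ‖WithLp.toLp 1 x‖ := by
  simp [l1norm, PiLp.norm_eq_of_nat 1]

theorem l2norm_eq_norm_toLp {ι : Type*} [Fintype ι] (x : ι → ℝ) :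
    l2norm x = ‖WithLp.toLp 2 x‖ := by
  simp [l2norm, EuclideanSpace.norm_eq]

theorem convexOn_l1norm {ι : Type*} [Fintype ι] :
    ConvexOn ℝ Set.univ (l1norm : (ι → ℝ) → ℝ) := by
  have h := (convexOn_univ_norm (E := PiLp 1 fun _ : ι => ℝ)).comp_linearMap
    (WithLp.linearEquiv 1 ℝ (ι → ℝ)).symm.toLinearMap
  exact h.congr fun x _ => (l1norm_eq_norm_toLp x).symm

theorem convexOn_l2norm {ι : Type*} [Fintype ι] :
    ConvexOn ℝ Set.univ (l2norm : (ι → ℝ) → ℝ) := by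
  have h := (convexOn_univ_norm (E := EuclideanSpace ℝ ι)).comp_linearMap
    (WithLp.linearEquiv 2 ℝ (ι → ℝ)).symm.toLinearMap
  exact h.congr fun x _ => (l2norm_eq_norm_toLp x).symm

/-- **Sparsity of Mixture of Tensors.**
If each `c i` is an ℓ¹-minimizer subject to `‖D c − a i‖₂ ≤ ε`, and `c⋆` is an
ℓ¹-minimizer subject to `‖D c − Σ w i • a i‖₂ ≤ ε` for a convex combination with
weights `w`, then `‖c⋆‖₁ ≤ max_i ‖c i‖₁`. -/
theorem sparsity_of_mixture {m K p : ℕ} (hp : 0 < p)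
    (D : Matrix (Fin m) (Fin K) ℝ) (ε : ℝ) (hε : 0 < ε)
    (a : Fin p → Fin m → ℝ) (c : Fin p → Fin K → ℝ)
    (hfeas : ∀ i, l2norm (D.mulVec (c i) - a i) ≤ ε)
    (hmin : ∀ i, ∀ c' : Fin K → ℝ, l2norm (D.mulVec c' - a i) ≤ ε →
      l1norm (c i) ≤ l1norm c')
    (w : Fin p → ℝ) (hw : ∀ i, 0 ≤ w i) (hwsum : ∑ i, w i = 1)
    (cstar : Fin K → ℝ)
    (hfeas' : l2norm (D.mulVec cstar - ∑ i, w i • a i) ≤ ε)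
    (hmin' : ∀ c' : Fin K → ℝ, l2norm (D.mulVec c' - ∑ i, w i • a i) ≤ ε →
      l1norm cstar ≤ l1norm c') :
    l1norm cstar ≤
      (Finset.univ : Finset (Fin p)).sup'
        (by simp [Finset.univ_nonempty_iff, Fin.pos_iff_nonempty.mp hp])
        (fun i => l1norm (c i)) := by
  have hresidual : D.mulVec (∑ i, w i • c i) - ∑ i, w i • a i =
      ∑ i, w i • (D.mulVec (c i) - a i) := by
    simp [Matrix.mulVec_sum, Matrix.mulVec_smul, smul_sub]
  have hmix : l2norm (D.mulVec (∑ i, w i • c i) - ∑ i, w i • a i) ≤ ε := by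
    rw [hresidual]
    exact (convexOn_l2norm.convex_le ε).sum_mem (fun i _ => hw i) hwsum
      (fun i _ => ⟨Set.mem_univ _, hfeas i⟩) |>.2
  refine (hmin' _ hmix).trans ?_
  exact (convexOn_l1norm.convex_le _).sum_mem (fun i _ => hw i) hwsum
    (fun i hi => ⟨Set.mem_univ _, Finset.le_sup' (fun i => l1norm (c i)) hi⟩) |>.2
end

section
/- Let τ > 0, d₀ > 0 and set ζ⋆ = (8π²τ d₀)⁻¹. Then for every integer n ≥ 0, ∫₀^∞ exp(−4π²τ d₀ q²) · G_n(q|ζ⋆) · q² dq equals (ζ⋆^{3/2} Γ(3/2) / 2)^{1/2} if n = 0 and equals 0 if n ≥ 1. In particular, at the matched scale ζ⋆ the isotropic Gaussian signal has a one-sparse radial SPF coefficient vector. -/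
open Real

/-- The generalized Laguerre polynomial of order `1/2`:
`L_n^{1/2}(x) = Σ_{k=0}^n (−1)^k [Γ(n+3/2)/(Γ(k+3/2)(n−k)! k!)] x^k`. -/
noncomputable def genLaguerreHalf (n : ℕ) (x : ℝ) : ℝ :=
  ∑ k ∈ Finset.range (n + 1),
    (-1 : ℝ) ^ k *
      (Real.Gamma ((n : ℝ) + 3 / 2) /
        (Real.Gamma ((k : ℝ) + 3 / 2) * (Nat.factorial (n - k)) * (Nat.factorial k))) *
      x ^ k

/-- The SPF radial basis function
`G_n(q|ζ) = [ (2/ζ^{3/2}) · n!/Γ(n+3/2) ]^{1/2} · exp(−q²/(2ζ)) · L_n^{1/2}(q²/ζ)`. -/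
noncomputable def spfG (n : ℕ) (q ζ : ℝ) : ℝ :=
  Real.sqrt (2 / ζ ^ ((3 : ℝ) / 2) * (Nat.factorial n) / Real.Gamma ((n : ℝ) + 3 / 2)) *
    Real.exp (-q ^ 2 / (2 * ζ)) * genLaguerreHalf n (q ^ 2 / ζ)

/-- The integrand of the even Gaussian moment, written with real powers. -/
lemma sq_div_pow_mul_exp_mul_sq_eq (ζ q : ℝ) (k : ℕ) :
    (q ^ 2 / ζ) ^ k * Real.exp (-q ^ 2 / ζ) * q ^ 2 =
      (ζ ^ k)⁻¹ * (q ^ (2 * (k : ℝ) + 2) * Real.exp (-ζ⁻¹ * q ^ (2 : ℝ))) := by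
  have hpow : q ^ (2 * (k : ℝ) + 2) = (q ^ 2) ^ k * q ^ 2 := by
    rw [← pow_mul, ← pow_add, ← Real.rpow_natCast]
    push_cast
    rfl
  rw [hpow, Real.rpow_two, div_pow, show -q ^ 2 / ζ = -ζ⁻¹ * q ^ 2 by ring]
  ring

lemma integrableOn_sq_div_pow_mul_exp_mul_sq {ζ : ℝ} (hζ : 0 < ζ) (k : ℕ) :
    MeasureTheory.IntegrableOn
      (fun q : ℝ => (q ^ 2 / ζ) ^ k * Real.exp (-q ^ 2 / ζ) * q ^ 2) (Set.Ioi 0) := by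
  have hk : (-1 : ℝ) < 2 * (k : ℝ) + 2 := by linarith [k.cast_nonneg (α := ℝ)]
  have h := (integrableOn_rpow_mul_exp_neg_mul_rpow hk two_pos (inv_pos.mpr hζ)).const_mul
    (ζ ^ k)⁻¹
  exact MeasureTheory.IntegrableOn.congr_fun h
    (fun q _ => (sq_div_pow_mul_exp_mul_sq_eq ζ q k).symm) measurableSet_Ioi

lemma integral_sq_div_pow_mul_exp_mul_sq {ζ : ℝ} (hζ : 0 < ζ) (k : ℕ) :
    ∫ q in Set.Ioi (0 : ℝ), (q ^ 2 / ζ) ^ k * Real.exp (-q ^ 2 / ζ) * q ^ 2 =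
      ζ ^ ((3 : ℝ) / 2) / 2 * Real.Gamma ((k : ℝ) + 3 / 2) := by
  have hk : (-1 : ℝ) < 2 * (k : ℝ) + 2 := by linarith [k.cast_nonneg (α := ℝ)]
  rw [MeasureTheory.setIntegral_congr_fun measurableSet_Ioi
      (fun q _ => sq_div_pow_mul_exp_mul_sq_eq ζ q k),
    MeasureTheory.integral_const_mul,
    integral_rpow_mul_exp_neg_mul_rpow two_pos hk (inv_pos.mpr hζ),
    show (2 * (k : ℝ) + 2 + 1) / 2 = (k : ℝ) + 3 / 2 by ring,
    show -(2 * (k : ℝ) + 2 + 1) / 2 = -((k : ℝ) + 3 / 2) by ring,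
    Real.inv_rpow hζ.le, Real.rpow_neg hζ.le, inv_inv, Real.rpow_add hζ, Real.rpow_natCast]
  field_simp

/-- Orthogonality of `L_n^{1/2}` to the constants, in the variable `q` with `x = q² / ζ`. -/
lemma integral_genLaguerreHalf_mul_exp_mul_sq {ζ : ℝ} (hζ : 0 < ζ) (n : ℕ) :
    ∫ q in Set.Ioi (0 : ℝ), genLaguerreHalf n (q ^ 2 / ζ) * Real.exp (-q ^ 2 / ζ) * q ^ 2 =
      if n = 0 then ζ ^ ((3 : ℝ) / 2) * Real.Gamma (3 / 2) / 2 else 0 := by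
  set c : ℕ → ℝ := fun k => (-1 : ℝ) ^ k * (Real.Gamma ((n : ℝ) + 3 / 2) /
    (Real.Gamma ((k : ℝ) + 3 / 2) * (Nat.factorial (n - k)) * (Nat.factorial k))) with hc
  have hsum : ∀ q : ℝ, genLaguerreHalf n (q ^ 2 / ζ) * Real.exp (-q ^ 2 / ζ) * q ^ 2 =
      ∑ k ∈ Finset.range (n + 1), c k * ((q ^ 2 / ζ) ^ k * Real.exp (-q ^ 2 / ζ) * q ^ 2) := by
    intro q
    simp only [genLaguerreHalf, Finset.sum_mul, hc, mul_assoc]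
  have hterm : ∀ k ∈ Finset.range (n + 1),
      c k * (ζ ^ ((3 : ℝ) / 2) / 2 * Real.Gamma ((k : ℝ) + 3 / 2)) =
        ζ ^ ((3 : ℝ) / 2) / 2 * Real.Gamma ((n : ℝ) + 3 / 2) / (Nat.factorial n) *
          ((-1 : ℝ) ^ k * (n.choose k : ℝ)) := by
    intro k hk
    have hΓ : Real.Gamma ((k : ℝ) + 3 / 2) ≠ 0 := (Real.Gamma_pos_of_pos (by positivity)).ne'
    rw [Nat.cast_choose ℝ (Finset.mem_range_succ_iff.mp hk)]
    simp only [hc]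
    field_simp
  have halt : ∑ k ∈ Finset.range (n + 1), (-1 : ℝ) ^ k * (n.choose k : ℝ) =
      if n = 0 then 1 else 0 := by
    exact_mod_cast Int.alternating_sum_range_choose (n := n)
  simp only [hsum]
  rw [MeasureTheory.integral_finsetSum _
    fun k _ => (integrableOn_sq_div_pow_mul_exp_mul_sq hζ k).const_mul (c k)]
  simp only [MeasureTheory.integral_const_mul, integral_sq_div_pow_mul_exp_mul_sq hζ]
  rw [Finset.sum_congr rfl hterm, ← Finset.mul_sum, halt]
  split_ifs with hn
  · subst hn
    simp
    ring
  · simp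

/-- **Optimal scale (SPF coefficients of the isotropic Gaussian).**
At the matched scale `ζ⋆ = (8π²τd₀)⁻¹`, the radial SPF coefficients of the
isotropic Gaussian signal `q ↦ exp(−4π²τd₀q²)` are one-sparse:
`∫₀^∞ exp(−4π²τd₀q²) Gₙ(q|ζ⋆) q² dq = (ζ⋆^{3/2} Γ(3/2)/2)^{1/2}` if `n = 0`,
and `0` if `n ≥ 1`. -/
theorem spf_coeff_isotropic_gaussian (τ d₀ : ℝ) (hτ : 0 < τ) (hd₀ : 0 < d₀)
    (ζ : ℝ) (hζ : ζ = (8 * π ^ 2 * τ * d₀)⁻¹) (n : ℕ) :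
    (∫ q in Set.Ioi (0 : ℝ),
        Real.exp (-(4 * π ^ 2 * τ * d₀ * q ^ 2)) * spfG n q ζ * q ^ 2) =
      if n = 0 then Real.sqrt (ζ ^ ((3 : ℝ) / 2) * Real.Gamma (3 / 2) / 2) else 0 := by
  have hζ_pos : 0 < ζ := by rw [hζ]; positivity
  have hrate : 4 * π ^ 2 * τ * d₀ = 1 / (2 * ζ) := by
    rw [hζ]
    field_simp
    norm_num
  have hintegrand : ∀ q : ℝ,
      Real.exp (-(4 * π ^ 2 * τ * d₀ * q ^ 2)) * spfG n q ζ * q ^ 2 =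
        Real.sqrt (2 / ζ ^ ((3 : ℝ) / 2) * (Nat.factorial n) / Real.Gamma ((n : ℝ) + 3 / 2)) *
          (genLaguerreHalf n (q ^ 2 / ζ) * Real.exp (-q ^ 2 / ζ) * q ^ 2) := by
    intro q
    have hexp : Real.exp (-q ^ 2 / ζ) =
        Real.exp (-(1 / (2 * ζ) * q ^ 2)) * Real.exp (-q ^ 2 / (2 * ζ)) := by
      rw [← Real.exp_add]
      congr 1
      field_simp
      ring
    rw [hrate, hexp, spfG]
    ring
  simp only [hintegrand]
  rw [MeasureTheory.integral_const_mul, integral_genLaguerreHalf_mul_exp_mul_sq hζ_pos]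
  split_ifs with hn
  · subst hn
    have hΓ : 0 < Real.Gamma (3 / 2) := Real.Gamma_pos_of_pos (by norm_num)
    have hinv : 2 / ζ ^ ((3 : ℝ) / 2) * (Nat.factorial 0 : ℝ) /
        Real.Gamma (((0 : ℕ) : ℝ) + 3 / 2) = (ζ ^ ((3 : ℝ) / 2) * Real.Gamma (3 / 2) / 2)⁻¹ := by
      simp only [Nat.factorial_zero, Nat.cast_one, Nat.cast_zero, zero_add]
      field_simp
    rw [hinv, Real.sqrt_inv, inv_mul_eq_div, Real.div_sqrt]
  · rw [mul_zero]
end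

section
/- Let τ > 0, ζ₀ > 0, d₀ > 0, d₁ > 0, and set ζ₁ = ζ₀ d₀ / d₁. Let T be a symmetric positive-definite 3×3 real matrix, let n ≥ 0 be an integer, and let F : ℝ³ \ {0} → ℝ be a bounded measurable function that is homogeneous of degree 0 (F(λ q) = F(q) for all λ > 0 and q ≠ 0). Then ∫_{ℝ³} exp(−4π²τ (d₁/d₀) qᵀ T q) · G_n(‖q‖ | ζ₁) · F(q) dq = (d₀/d₁)^{3/4} · ∫_{ℝ³} exp(−4π²τ qᵀ T q) · G_n(‖q‖ | ζ₀) · F(q) dq. -/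
open Real Matrix

/-- Rescaling the SPF scale by `s⁻²` dilates the radial basis function by `s`, up to the
factor `s^{3/2}`. -/
theorem spfG_div_sq (n : ℕ) (r : ℝ) {ζ s : ℝ} (hζ : 0 < ζ) (hs : 0 < s) :
    spfG n r (ζ / s ^ 2) = s ^ ((3 : ℝ) / 2) * spfG n (s * r) ζ := by
  have hpow : (ζ / s ^ 2) ^ ((3 : ℝ) / 2) = ζ ^ ((3 : ℝ) / 2) / (s ^ ((3 : ℝ) / 2)) ^ 2 := by
    rw [Real.div_rpow hζ.le (by positivity), ← Real.rpow_natCast, ← Real.rpow_natCast,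
      ← Real.rpow_mul hs.le, ← Real.rpow_mul hs.le, mul_comm ((2 : ℕ) : ℝ)]
  have hnorm : 2 / (ζ / s ^ 2) ^ ((3 : ℝ) / 2) * (Nat.factorial n) / Real.Gamma ((n : ℝ) + 3 / 2) =
      (s ^ ((3 : ℝ) / 2)) ^ 2 *
        (2 / ζ ^ ((3 : ℝ) / 2) * (Nat.factorial n) / Real.Gamma ((n : ℝ) + 3 / 2)) := by
    rw [hpow, div_div_eq_mul_div]
    ring
  have hexp : -r ^ 2 / (2 * (ζ / s ^ 2)) = -(s * r) ^ 2 / (2 * ζ) := by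
    field_simp
  have harg : r ^ 2 / (ζ / s ^ 2) = (s * r) ^ 2 / ζ := by
    field_simp
  unfold spfG
  rw [hnorm, hexp, harg, Real.sqrt_mul (by positivity), Real.sqrt_sq (by positivity)]
  ring

/-- **Uniform rescaling of SPF coefficients (core of Theorem 3).**
For a symmetric positive-definite tensor `T`, a bounded measurable angular factor
`F` homogeneous of degree 0, and `ζ₁ = ζ₀ d₀/d₁`,
`∫ exp(−4π²τ(d₁/d₀)qᵀTq) Gₙ(‖q‖|ζ₁) F(q) dq
  = (d₀/d₁)^{3/4} ∫ exp(−4π²τ qᵀTq) Gₙ(‖q‖|ζ₀) F(q) dq`. -/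
theorem spf_coeff_rescale (τ ζ₀ d₀ d₁ : ℝ) (hτ : 0 < τ) (hζ₀ : 0 < ζ₀)
    (hd₀ : 0 < d₀) (hd₁ : 0 < d₁) (ζ₁ : ℝ) (hζ₁ : ζ₁ = ζ₀ * d₀ / d₁)
    (T : Matrix (Fin 3) (Fin 3) ℝ) (hTsymm : T.IsSymm) (hTpos : T.PosDef)
    (n : ℕ)
    (F : EuclideanSpace ℝ (Fin 3) → ℝ)
    (hFmeas : Measurable F)
    (hFbdd : ∃ C : ℝ, ∀ q : EuclideanSpace ℝ (Fin 3), |F q| ≤ C)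
    (hFhom : ∀ (lam : ℝ), 0 < lam → ∀ q : EuclideanSpace ℝ (Fin 3), q ≠ 0 →
      F (lam • q) = F q) :
    (∫ q : EuclideanSpace ℝ (Fin 3),
        Real.exp (-(4 * π ^ 2 * τ * (d₁ / d₀) * ((q : Fin 3 → ℝ) ⬝ᵥ T.mulVec q))) *
          spfG n ‖q‖ ζ₁ * F q) =
      (d₀ / d₁) ^ ((3 : ℝ) / 4) *
        ∫ q : EuclideanSpace ℝ (Fin 3),
          Real.exp (-(4 * π ^ 2 * τ * ((q : Fin 3 → ℝ) ⬝ᵥ T.mulVec q))) *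
            spfG n ‖q‖ ζ₀ * F q := by
  obtain ⟨s, hs, hsq⟩ : ∃ s : ℝ, 0 < s ∧ s ^ 2 = d₁ / d₀ :=
    ⟨√(d₁ / d₀), by positivity, Real.sq_sqrt (by positivity)⟩
  have hζ : ζ₁ = ζ₀ / s ^ 2 := by
    rw [hζ₁, hsq]
    field_simp
  have hF : ∀ q : EuclideanSpace ℝ (Fin 3), F (s • q) = F q := by
    intro q
    rcases eq_or_ne q 0 with rfl | hq
    · rw [smul_zero]
    · exact hFhom s hs q hq
  have hfactor : (d₀ / d₁) ^ ((3 : ℝ) / 4) = s ^ ((3 : ℝ) / 2) * (s ^ 3)⁻¹ := by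
    rw [← inv_div d₁ d₀, ← hsq, ← Real.rpow_natCast s 2, ← Real.rpow_natCast s 3,
      ← Real.rpow_neg hs.le, ← Real.rpow_neg hs.le, ← Real.rpow_mul hs.le, ← Real.rpow_add hs]
    norm_num
  have hscale := MeasureTheory.Measure.integral_comp_smul_of_nonneg MeasureTheory.volume
    (fun q : EuclideanSpace ℝ (Fin 3) =>
      Real.exp (-(4 * π ^ 2 * τ * ((q : Fin 3 → ℝ) ⬝ᵥ T.mulVec q))) * spfG n ‖q‖ ζ₀ * F q)
    s (hR := hs.le)
  rw [finrank_euclideanSpace_fin, smul_eq_mul] at hscale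
  rw [hfactor, mul_assoc (s ^ ((3 : ℝ) / 2)), ← hscale, ← MeasureTheory.integral_const_mul]
  congr 1 with q
  rw [hζ, spfG_div_sq n _ hζ₀ hs, hF, norm_smul, Real.norm_of_nonneg hs.le, ← hsq,
    WithLp.ofLp_smul, Matrix.mulVec_smul, smul_dotProduct, dotProduct_smul, smul_eq_mul,
    smul_eq_mul]
  ring_nf
end

section
/- Let τ > 0, ζ₀ > 0, d₀ > 0, d₁ > 0, t ≥ 1, and set ζ₁ = ζ₀ d₀/d₁, s = (d₀/d₁)^{3/4}. Let T₁, …, T_Q be symmetric positive-definite 3×3 real matrices with tr(T_j)/3 ∈ [d₀, t d₀] for every j, and let F₁, …, F_M : ℝ³ \ {0} → ℝ be bounded measurable functions homogeneous of degree 0. For a scale ζ > 0 and a tensor T define the coefficient vector a(T, ζ) ∈ ℝ^{(N+1)M} with entries a(T, ζ)_{n,k} = ∫_{ℝ³} exp(−4π²τ qᵀ T q) G_n(‖q‖|ζ) F_k(q) dq for 0 ≤ n ≤ N, 1 ≤ k ≤ M. Fix ε₀ > 0 and set ε₁ = s ε₀. Then the rescaled tensors T'_j = (d₁/d₀) T_j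 satisfy tr(T'_j)/3 ∈ [d₁, t d₁], and for every real (N+1)M × K matrix D, Σ_{j=1}^Q inf { ‖c‖₁ : ‖D c − a(T'_j, ζ₁)‖₂ ≤ ε₁ } = s · Σ_{j=1}^Q inf { ‖c‖₁ : ‖D c − a(T_j, ζ₀)‖₂ ≤ ε₀ }. Consequently, a matrix D₀ minimizes the left-hand objective over all (N+1)M × K matrices D if and only if it minimizes the right-hand objective. -/
open Real Matrix
open scoped ENNReal

/-- The SPF coefficient vector `a(T, ζ)` of the single-tensor signal
`E(q) = exp(−4π²τ qᵀTq)`: entries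
`a(T,ζ)_{n,k} = ∫_{ℝ³} exp(−4π²τ qᵀTq) Gₙ(‖q‖|ζ) F_k(q) dq`. -/
noncomputable def spfCoeff {M : ℕ} (N : ℕ) (τ : ℝ)
    (F : Fin M → EuclideanSpace ℝ (Fin 3) → ℝ)
    (T : Matrix (Fin 3) (Fin 3) ℝ) (ζ : ℝ) : Fin (N + 1) × Fin M → ℝ :=
  fun nk => ∫ q : EuclideanSpace ℝ (Fin 3),
    Real.exp (-(4 * π ^ 2 * τ * ((q : Fin 3 → ℝ) ⬝ᵥ T.mulVec q))) *
      spfG nk.1 ‖q‖ ζ * F nk.2 q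

/-- The dictionary-learning objective
`Σⱼ inf { ‖c‖₁ : ‖D c − aⱼ‖₂ ≤ ε }` (infima in the extended reals). -/
noncomputable def dlObjective {ι : Type*} [Fintype ι] {K Q : ℕ}
    (D : Matrix ι (Fin K) ℝ) (ε : ℝ) (a : Fin Q → ι → ℝ) : ℝ≥0∞ :=
  ∑ j, ⨅ c ∈ {c : Fin K → ℝ | l2norm (D.mulVec c - a j) ≤ ε},
    ENNReal.ofReal (l1norm c)

/-- Dilation covariance of the SPF radial basis. -/
theorem spfG_dilate (n : ℕ) (q : ℝ) {ζ r : ℝ} (hζ : 0 < ζ) (hr : 0 < r) :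
    spfG n (r * q) (r ^ 2 * ζ) = (r ^ ((3 : ℝ) / 2))⁻¹ * spfG n q ζ := by
  have hexp : -(r * q) ^ 2 / (2 * (r ^ 2 * ζ)) = -q ^ 2 / (2 * ζ) := by
    field_simp
  have harg : (r * q) ^ 2 / (r ^ 2 * ζ) = q ^ 2 / ζ := by
    field_simp
  have hpow : (r ^ 2 * ζ) ^ ((3 : ℝ) / 2) = (r ^ ((3 : ℝ) / 2)) ^ 2 * ζ ^ ((3 : ℝ) / 2) := by
    rw [Real.mul_rpow (by positivity) hζ.le, ← Real.rpow_natCast, ← Real.rpow_natCast,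
      ← Real.rpow_mul hr.le, ← Real.rpow_mul hr.le, mul_comm ((2 : ℕ) : ℝ)]
  have hρ : 0 < r ^ ((3 : ℝ) / 2) := by positivity
  have hconst : 2 / ((r ^ ((3 : ℝ) / 2)) ^ 2 * ζ ^ ((3 : ℝ) / 2)) * (Nat.factorial n) /
        Real.Gamma ((n : ℝ) + 3 / 2) =
      ((r ^ ((3 : ℝ) / 2))⁻¹) ^ 2 *
        (2 / ζ ^ ((3 : ℝ) / 2) * (Nat.factorial n) / Real.Gamma ((n : ℝ) + 3 / 2)) := by
    rw [← div_div]
    ring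
  simp only [spfG]
  rw [hexp, harg, hpow, hconst, Real.sqrt_mul (by positivity), Real.sqrt_sq (by positivity)]
  ring

/-- Scaling the tensor by `r⁻²` and the SPF scale by `r²` multiplies the coefficients of a signal
by `r^{3/2}`. -/
theorem spfCoeff_dilate {M : ℕ} (N : ℕ) (τ : ℝ) (F : Fin M → EuclideanSpace ℝ (Fin 3) → ℝ)
    (hF : ∀ k, ∀ lam : ℝ, 0 < lam → ∀ q : EuclideanSpace ℝ (Fin 3), q ≠ 0 →
      F k (lam • q) = F k q)
    (T : Matrix (Fin 3) (Fin 3) ℝ) {ζ r : ℝ} (hζ : 0 < ζ) (hr : 0 < r) :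
    spfCoeff N τ F ((r ^ 2)⁻¹ • T) (r ^ 2 * ζ) = r ^ ((3 : ℝ) / 2) • spfCoeff N τ F T ζ := by
  funext nk
  simp only [spfCoeff, Pi.smul_apply, smul_eq_mul]
  set f : EuclideanSpace ℝ (Fin 3) → ℝ := fun q =>
    Real.exp (-(4 * π ^ 2 * τ * ((q : Fin 3 → ℝ) ⬝ᵥ ((r ^ 2)⁻¹ • T).mulVec q))) *
      spfG nk.1 ‖q‖ (r ^ 2 * ζ) * F nk.2 q with hf
  have hsub := MeasureTheory.Measure.integral_comp_smul
    (MeasureTheory.volume : MeasureTheory.Measure (EuclideanSpace ℝ (Fin 3))) f r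
  have hcongr : ∫ q, f (r • q) = ∫ q : EuclideanSpace ℝ (Fin 3), (r ^ ((3 : ℝ) / 2))⁻¹ *
      (Real.exp (-(4 * π ^ 2 * τ * ((q : Fin 3 → ℝ) ⬝ᵥ T.mulVec q))) *
        spfG nk.1 ‖q‖ ζ * F nk.2 q) := by
    refine MeasureTheory.integral_congr_ae ?_
    filter_upwards [MeasureTheory.Measure.ae_ne MeasureTheory.volume 0] with q hq
    have hquad : ((r • q : EuclideanSpace ℝ (Fin 3)) : Fin 3 → ℝ) ⬝ᵥ
        ((r ^ 2)⁻¹ • T).mulVec (r • q : EuclideanSpace ℝ (Fin 3)) =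
        (q : Fin 3 → ℝ) ⬝ᵥ T.mulVec q := by
      simp only [WithLp.ofLp_smul, Matrix.smul_mulVec, Matrix.mulVec_smul, smul_dotProduct,
        dotProduct_smul, smul_eq_mul]
      field_simp
    simp only [hf]
    rw [hquad, hF nk.2 r hr q hq, norm_smul, Real.norm_of_nonneg hr.le, spfG_dilate _ _ hζ hr]
    ring
  rw [hcongr, MeasureTheory.integral_const_mul, finrank_euclideanSpace_fin,
    abs_of_pos (by positivity), smul_eq_mul] at hsub
  have hsq : r ^ ((3 : ℝ) / 2) * r ^ ((3 : ℝ) / 2) = r ^ 3 := by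
    rw [← Real.rpow_add hr, ← Real.rpow_natCast]
    norm_num
  have hρ : 0 < r ^ ((3 : ℝ) / 2) := by positivity
  rw [← hsq] at hsub
  field_simp at hsub
  linarith

theorem l1norm_smul {ι : Type*} [Fintype ι] {s : ℝ} (hs : 0 ≤ s) (x : ι → ℝ) :
    l1norm (s • x) = s * l1norm x := by
  simp [l1norm, abs_mul, abs_of_nonneg hs, Finset.mul_sum]

theorem l2norm_smul {ι : Type*} [Fintype ι] {s : ℝ} (hs : 0 ≤ s) (x : ι → ℝ) :
    l2norm (s • x) = s * l2norm x := by
  simp only [l2norm, Pi.smul_apply, smul_eq_mul, mul_pow, ← Finset.mul_sum]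
  rw [Real.sqrt_mul (sq_nonneg s), Real.sqrt_sq hs]

/-- The dictionary-learning objective is positively homogeneous in threshold and data jointly. -/
theorem dlObjective_smul {ι : Type*} [Fintype ι] {K Q : ℕ} (D : Matrix ι (Fin K) ℝ) (ε : ℝ)
    (a : Fin Q → ι → ℝ) {s : ℝ} (hs : 0 < s) :
    dlObjective D (s * ε) (fun j => s • a j) = ENNReal.ofReal s * dlObjective D ε a := by
  have hs0 : ENNReal.ofReal s ≠ 0 := by simpa using hs
  simp only [dlObjective, Finset.mul_sum]
  refine Finset.sum_congr rfl fun j _ => ?_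
  rw [ENNReal.mul_iInf_of_ne hs0 ENNReal.ofReal_ne_top,
    ← (MulAction.surjective₀ hs.ne').iInf_comp]
  refine iInf_congr fun c => ?_
  rw [ENNReal.mul_iInf_of_ne hs0 ENNReal.ofReal_ne_top]
  refine iInf_congr_Prop ?_ fun _ => ?_
  · simp only [Set.mem_ofPred_eq]
    rw [Matrix.mulVec_smul, ← smul_sub, l2norm_smul hs.le, mul_le_mul_iff_right₀ hs]
  · rw [l1norm_smul hs.le, ENNReal.ofReal_mul hs.le]

/-- **Optimal Dictionary (Theorem 3).**
Rescaling the tensors by `d₁/d₀` while rescaling the SPF scale to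
`ζ₁ = ζ₀d₀/d₁` and the fitting threshold to `ε₁ = sε₀` with `s = (d₀/d₁)^{3/4}`
keeps the mean diffusivities in `[d₁, td₁]` and multiplies the
dictionary-learning objective by `s`; consequently `D₀` is optimal for the
rescaled problem iff it is optimal for the original problem. -/
theorem optimal_dictionary_rescale (τ ζ₀ d₀ d₁ t : ℝ)
    (hτ : 0 < τ) (hζ₀ : 0 < ζ₀) (hd₀ : 0 < d₀) (hd₁ : 0 < d₁) (ht : 1 ≤ t)
    (ζ₁ : ℝ) (hζ₁ : ζ₁ = ζ₀ * d₀ / d₁)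
    (s : ℝ) (hs : s = (d₀ / d₁) ^ ((3 : ℝ) / 4))
    (N M Q K : ℕ)
    (T : Fin Q → Matrix (Fin 3) (Fin 3) ℝ)
    (hTsymm : ∀ j, (T j).IsSymm) (hTpos : ∀ j, (T j).PosDef)
    (hTmd : ∀ j, (T j).trace / 3 ∈ Set.Icc d₀ (t * d₀))
    (F : Fin M → EuclideanSpace ℝ (Fin 3) → ℝ)
    (hFmeas : ∀ k, Measurable (F k))
    (hFbdd : ∀ k, ∃ C : ℝ, ∀ q, |F k q| ≤ C)
    (hFhom : ∀ k, ∀ lam : ℝ, 0 < lam → ∀ q : EuclideanSpace ℝ (Fin 3), q ≠ 0 →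
      F k (lam • q) = F k q)
    (ε₀ : ℝ) (hε₀ : 0 < ε₀) (ε₁ : ℝ) (hε₁ : ε₁ = s * ε₀) :
    (∀ j, ((d₁ / d₀) • T j).trace / 3 ∈ Set.Icc d₁ (t * d₁)) ∧
    (∀ D : Matrix (Fin (N + 1) × Fin M) (Fin K) ℝ,
      dlObjective D ε₁ (fun j => spfCoeff N τ F ((d₁ / d₀) • T j) ζ₁) =
        ENNReal.ofReal s * dlObjective D ε₀ (fun j => spfCoeff N τ F (T j) ζ₀)) ∧
    (∀ D₀ : Matrix (Fin (N + 1) × Fin M) (Fin K) ℝ,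
      (∀ D : Matrix (Fin (N + 1) × Fin M) (Fin K) ℝ,
          dlObjective D₀ ε₁ (fun j => spfCoeff N τ F ((d₁ / d₀) • T j) ζ₁) ≤
            dlObjective D ε₁ (fun j => spfCoeff N τ F ((d₁ / d₀) • T j) ζ₁)) ↔
        (∀ D : Matrix (Fin (N + 1) × Fin M) (Fin K) ℝ,
          dlObjective D₀ ε₀ (fun j => spfCoeff N τ F (T j) ζ₀) ≤
            dlObjective D ε₀ (fun j => spfCoeff N τ F (T j) ζ₀))) := by
  have hspos : 0 < s := by rw [hs]; positivity
  have hcoeff : ∀ j, spfCoeff N τ F ((d₁ / d₀) • T j) ζ₁ = s • spfCoeff N τ F (T j) ζ₀ := by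
    intro j
    have hsq : √(d₀ / d₁) ^ 2 = d₀ / d₁ := Real.sq_sqrt (by positivity)
    have h := spfCoeff_dilate N τ F hFhom (T j) hζ₀
      (show 0 < √(d₀ / d₁) from Real.sqrt_pos.2 (by positivity))
    rw [hsq, inv_div, Real.sqrt_eq_rpow, ← Real.rpow_mul (by positivity)] at h
    rw [hζ₁, hs, show ζ₀ * d₀ / d₁ = d₀ / d₁ * ζ₀ by ring, h]
    norm_num
  have hobj : ∀ D : Matrix (Fin (N + 1) × Fin M) (Fin K) ℝ,
      dlObjective D ε₁ (fun j => spfCoeff N τ F ((d₁ / d₀) • T j) ζ₁) =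
        ENNReal.ofReal s * dlObjective D ε₀ (fun j => spfCoeff N τ F (T j) ζ₀) := by
    intro D
    simp only [hcoeff, hε₁]
    exact dlObjective_smul D ε₀ _ hspos
  refine ⟨fun j => ?_, hobj, fun D₀ => forall_congr' fun D => ?_⟩
  · have hmean : ((d₁ / d₀) • T j).trace / 3 = d₁ / d₀ * ((T j).trace / 3) := by
      rw [Matrix.trace_smul, smul_eq_mul, mul_div_assoc]
    have hr : 0 ≤ d₁ / d₀ := by positivity
    obtain ⟨hlo, hhi⟩ := hTmd j
    rw [hmean]
    constructor
    · calc d₁ = d₁ / d₀ * d₀ := by field_simp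
        _ ≤ _ := mul_le_mul_of_nonneg_left hlo hr
    · calc _ ≤ d₁ / d₀ * (t * d₀) := mul_le_mul_of_nonneg_left hhi hr
        _ = t * d₁ := by field_simp
  · rw [hobj, hobj]
    exact ENNReal.mul_le_mul_iff_right (by simpa using hspos) ENNReal.ofReal_ne_top
end
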